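/- Let f : ℝ^d → ℝ^m, x̄ ∈ ℝ^d, and A = Df(x̄) its Jacobian matrix, and suppose there exist C > 0 and ε > 0 such that ‖f(x̄ + z) − f(x̄ − z) − 2·A·z‖ ≤ C·‖z‖³ for all ‖z‖ ≤ ε. Let z¹, …, z^{n_s} ∈ ℝ^d satisfy ‖zⁱ‖ ≤ δ for some δ ≤ ε, let Z ∈ ℝ^{d×n_s} have columns zⁱ, let Y ∈ ℝ^{m×n_s} have columns f(x̄ + zⁱ) − f(x̄ − zⁱ), and suppose the smallest eigenvalue of the Gram matrix G = Z·Zᵀ = Σᵢ zⁱ(zⁱ)ᵀ is at least λ > 0. Then the LLS-CD estimate Â = (1/2)·Y·Zᵀ·G⁻¹ satisfies ‖Â − A‖ ≤ (C·n_s·δ⁴)/(2λ) in operator norm. (This makes precise the error term of order ‖δx‖² + ‖δu‖² in equation (3) of the paper, since λ is of order n_s·δ².) -/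

import Mathlib

open Matrix

/-!
The least squares estimate `Y Zᴴ (Z Zᴴ)⁻¹` is linear in the data `Y` and recovers `A` exactly from
the data `A Z`, so its error is the estimate `E Zᴴ (Z Zᴴ)⁻¹` computed from the residuals
`E = Y - A Z`. Here `E Zᴴ = ∑ᵢ eᵢ zᵢᴴ` is a sum of rank-one matrices of norm `‖eᵢ‖ ‖zᵢ‖`, and
`‖(Z Zᴴ)⁻¹‖ ≤ lam⁻¹` because `lam ‖v‖² ≤ ⟪Z Zᴴ v, v⟫`. For central differences the matrix being
estimated is `2 A`, with residuals of size `C δ³`.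
-/

section LeastSquaresEstimate

variable {R m n ι : Type*} [Fintype n] [Fintype ι] [DecidableEq n] [CommRing R] [StarRing R]

/-- The closed form, given by the normal equations, of the linear least squares fit: over `ℝ` or
`ℂ` it is the matrix `B` minimizing `∑ᵢ ‖yᵢ - B zᵢ‖²`, with `yᵢ` and `zᵢ` the columns of `Y` and
`Z`. It is meaningful only when the Gram matrix `Z * Zᴴ` is invertible,
since otherwise `⁻¹` takes the junk value `0`. -/
noncomputable def leastSquaresEstimate (Y : Matrix m ι R) (Z : Matrix n ι R) : Matrix m n R :=
  Y * Zᴴ * (Z * Zᴴ)⁻¹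

theorem leastSquaresEstimate_sub (Y : Matrix m ι R) (A : Matrix m n R) {Z : Matrix n ι R}
    (hZ : IsUnit (Z * Zᴴ)) :
    leastSquaresEstimate Y Z - A = leastSquaresEstimate (Y - A * Z) Z := by
  rw [leastSquaresEstimate, leastSquaresEstimate, Matrix.sub_mul, Matrix.sub_mul,
    Matrix.mul_assoc A, mul_nonsing_inv_cancel_right _ _ ((isUnit_iff_isUnit_det _).mp hZ)]

end LeastSquaresEstimate

theorem mul_conjTranspose_eq_sum_vecMulVec {R m n ι : Type*} [Fintype ι]
    [NonUnitalNonAssocSemiring R] [StarRing R] (E : Matrix m ι R) (Z : Matrix n ι R) :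
    E * Zᴴ = ∑ i, vecMulVec (E.col i) (star (Z.col i)) := by
  ext j k
  simp [mul_apply, Matrix.sum_apply, vecMulVec_apply]

section OperatorNorm

open scoped Matrix.Norms.L2Operator ComplexOrder

variable {𝕜 m n ι : Type*} [RCLike 𝕜] [DecidableEq n]

theorem posDef_of_posSemidef_sub_smul_one [Finite n] {G : Matrix n n 𝕜} {lam : ℝ} (hlam : 0 < lam)
    (hG : (G - lam • (1 : Matrix n n 𝕜)).PosSemidef) : G.PosDef := by
  simpa using (PosDef.one.smul hlam).add_posSemidef hG

variable [Fintype n]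

theorem mul_norm_le_norm_toEuclideanLin_of_posSemidef_sub_smul_one {G : Matrix n n 𝕜} {lam : ℝ}
    (hG : (G - lam • (1 : Matrix n n 𝕜)).PosSemidef) (v : EuclideanSpace 𝕜 n) :
    lam * ‖v‖ ≤ ‖toEuclideanLin G v‖ := by
  have coercive : lam * ‖v‖ ^ 2 ≤ RCLike.re (inner 𝕜 (toEuclideanLin G v) v) := by
    have h := (isPositive_toEuclideanLin_iff.mpr hG).re_inner_nonneg_left v
    rw [RCLike.real_smul_eq_coe_smul (K := 𝕜), map_sub, map_smul, toLpLin_one, LinearMap.sub_apply,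
      LinearMap.smul_apply, LinearMap.id_apply, inner_sub_left, inner_smul_left, map_sub,
      inner_self_eq_norm_sq_to_K, RCLike.conj_ofReal] at h
    exact_mod_cast sub_nonneg.mp h
  rcases (norm_nonneg v).eq_or_lt with hv | hv
  · simp [← hv]
  · refine le_of_mul_le_mul_right ?_ hv
    calc lam * ‖v‖ * ‖v‖ = lam * ‖v‖ ^ 2 := by ring
      _ ≤ RCLike.re (inner 𝕜 (toEuclideanLin G v) v) := coercive
      _ ≤ ‖toEuclideanLin G v‖ * ‖v‖ := re_inner_le_norm _ _

theorem l2_opNorm_inv_le_of_posSemidef_sub_smul_one {G : Matrix n n 𝕜} {lam : ℝ} (hlam : 0 < lam)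
    (hG : (G - lam • (1 : Matrix n n 𝕜)).PosSemidef) : ‖G⁻¹‖ ≤ lam⁻¹ := by
  have hGdet := (isUnit_iff_isUnit_det G).mp (posDef_of_posSemidef_sub_smul_one hlam hG).isUnit
  rw [l2_opNorm_def]
  refine ContinuousLinearMap.opNorm_le_bound _ (by positivity) fun w => ?_
  have hw : toEuclideanLin G (toEuclideanLin G⁻¹ w) = w := by
    rw [← LinearMap.comp_apply, ← toLpLin_mul_same, mul_nonsing_inv G hGdet, toLpLin_one,
      LinearMap.id_apply]
  rw [inv_mul_eq_div, le_div_iff₀' hlam]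
  exact (mul_norm_le_norm_toEuclideanLin_of_posSemidef_sub_smul_one hG _).trans_eq
    (congrArg norm hw)

variable [Fintype m]

theorem l2_opNorm_vecMulVec_star (x : EuclideanSpace 𝕜 m) (y : EuclideanSpace 𝕜 n) :
    ‖vecMulVec x.ofLp (star y.ofLp)‖ = ‖x‖ * ‖y‖ := by
  rw [← InnerProductSpace.norm_rankOne (𝕜 := 𝕜), l2_opNorm_def,
    ← InnerProductSpace.symm_toEuclideanLin_rankOne, LinearEquiv.trans_apply,
    LinearEquiv.apply_symm_apply]
  rfl

variable [Fintype ι]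

theorem l2_opNorm_mul_conjTranspose_le (E : Matrix m ι 𝕜) (Z : Matrix n ι 𝕜) :
    ‖E * Zᴴ‖ ≤ ∑ i, ‖WithLp.toLp 2 (E.col i)‖ * ‖WithLp.toLp 2 (Z.col i)‖ := by
  rw [mul_conjTranspose_eq_sum_vecMulVec]
  exact norm_sum_le_of_le _ fun i _ =>
    (l2_opNorm_vecMulVec_star (WithLp.toLp 2 (E.col i)) (WithLp.toLp 2 (Z.col i))).le

theorem l2_opNorm_leastSquaresEstimate_le (Y : Matrix m ι 𝕜) {Z : Matrix n ι 𝕜} {lam : ℝ}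
    (hlam : 0 < lam) (hG : (Z * Zᴴ - lam • (1 : Matrix n n 𝕜)).PosSemidef) :
    ‖leastSquaresEstimate Y Z‖ ≤
      (∑ i, ‖WithLp.toLp 2 (Y.col i)‖ * ‖WithLp.toLp 2 (Z.col i)‖) / lam :=
  calc ‖Y * Zᴴ * (Z * Zᴴ)⁻¹‖ ≤ ‖Y * Zᴴ‖ * ‖(Z * Zᴴ)⁻¹‖ := l2_opNorm_mul _ _
    _ ≤ (∑ i, ‖WithLp.toLp 2 (Y.col i)‖ * ‖WithLp.toLp 2 (Z.col i)‖) * lam⁻¹ := by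
      gcongr
      · exact l2_opNorm_mul_conjTranspose_le Y Z
      · exact l2_opNorm_inv_le_of_posSemidef_sub_smul_one hlam hG
    _ = _ := (div_eq_mul_inv _ _).symm

theorem l2_opNorm_leastSquaresEstimate_sub_le (Y : Matrix m ι 𝕜) (A : Matrix m n 𝕜)
    {Z : Matrix n ι 𝕜} {lam : ℝ} (hlam : 0 < lam)
    (hG : (Z * Zᴴ - lam • (1 : Matrix n n 𝕜)).PosSemidef) :
    ‖leastSquaresEstimate Y Z - A‖ ≤
      (∑ i, ‖WithLp.toLp 2 ((Y - A * Z).col i)‖ * ‖WithLp.toLp 2 (Z.col i)‖) / lam := by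
  rw [leastSquaresEstimate_sub Y A (posDef_of_posSemidef_sub_smul_one hlam hG).isUnit]
  exact l2_opNorm_leastSquaresEstimate_le _ hlam hG

theorem llscd_error_bound_general
    (f : EuclideanSpace 𝕜 n → EuclideanSpace 𝕜 m) (xbar : EuclideanSpace 𝕜 n)
    (A : Matrix m n 𝕜) (C δ : ℝ) (p : ℕ) (hC : 0 ≤ C) (z : ι → EuclideanSpace 𝕜 n)
    (hz : ∀ i, ‖z i‖ ≤ δ)
    (hcd : ∀ i, ‖f (xbar + z i) - f (xbar - z i) - (2 : 𝕜) • toEuclideanLin A (z i)‖ ≤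
      C * ‖z i‖ ^ p)
    (Z : Matrix n ι 𝕜) (hZ : ∀ j i, Z j i = z i j)
    (Y : Matrix m ι 𝕜) (hY : ∀ j i, Y j i = (f (xbar + z i) - f (xbar - z i)) j)
    (lam : ℝ) (hlam : 0 < lam) (hG : (Z * Zᴴ - lam • (1 : Matrix n n 𝕜)).PosSemidef) :
    ‖(1 / 2 : 𝕜) • leastSquaresEstimate Y Z - A‖ ≤
      C * Fintype.card ι * δ ^ (p + 1) / (2 * lam) := by
  have residual (i : ι) : WithLp.toLp 2 ((Y - (2 : 𝕜) • A * Z).col i) =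
      f (xbar + z i) - f (xbar - z i) - (2 : 𝕜) • toEuclideanLin A (z i) := by
    ext j
    simp [hY, mul_apply, hZ, toLpLin_apply, mulVec, dotProduct]
  have sample (i : ι) : WithLp.toLp 2 (Z.col i) = z i := by
    ext j
    exact hZ j i
  have term_le (i : ι) :
      ‖WithLp.toLp 2 ((Y - (2 : 𝕜) • A * Z).col i)‖ * ‖WithLp.toLp 2 (Z.col i)‖ ≤
        C * δ ^ (p + 1) := by
    rw [residual, sample]
    calc _ ≤ C * ‖z i‖ ^ p * ‖z i‖ := by gcongr; exact hcd i
      _ = C * ‖z i‖ ^ (p + 1) := by ring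
      _ ≤ C * δ ^ (p + 1) := by gcongr; exact hz i
  have half_smul_sub : (1 / 2 : 𝕜) • leastSquaresEstimate Y Z - A =
      (1 / 2 : 𝕜) • (leastSquaresEstimate Y Z - (2 : 𝕜) • A) := by
    rw [smul_sub, smul_smul, one_div_mul_cancel two_ne_zero, one_smul]
  calc ‖(1 / 2 : 𝕜) • leastSquaresEstimate Y Z - A‖
      = 1 / 2 * ‖leastSquaresEstimate Y Z - (2 : 𝕜) • A‖ := by
        rw [half_smul_sub, norm_smul]
        simp
    _ ≤ 1 / 2 * ((∑ _i : ι, C * δ ^ (p + 1)) / lam) := by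
        grw [l2_opNorm_leastSquaresEstimate_sub_le Y _ hlam hG]
        gcongr 1 / 2 * (?_ / lam)
        exact Finset.sum_le_sum fun i _ => term_le i
    _ = C * Fintype.card ι * δ ^ (p + 1) / (2 * lam) := by
        rw [Finset.sum_const, Finset.card_univ, nsmul_eq_mul]
        field_simp

end OperatorNorm

/-- Quantitative error bound for the LLS-CD Jacobian estimator: if the central
differences of `f` about `xbar` match `2 A z` up to `C ‖z‖³` for `‖z‖ ≤ ε`, the
samples have norm at most `δ ≤ ε`, and the Gram matrix `G = Z Zᵀ` has smallest
eigenvalue at least `λ > 0`, then the estimate `Â = (1/2) Y Zᵀ G⁻¹` satisfies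
`‖Â - A‖ ≤ C ns δ⁴ / (2 λ)` in the ℓ²→ℓ² operator norm. -/
theorem llscd_error_bound
    {d m ns : ℕ}
    (f : EuclideanSpace ℝ (Fin d) → EuclideanSpace ℝ (Fin m))
    (xbar : EuclideanSpace ℝ (Fin d))
    (A : Matrix (Fin m) (Fin d) ℝ)
    (C ε : ℝ) (hC : 0 < C) (hε : 0 < ε)
    (hcd : ∀ z : EuclideanSpace ℝ (Fin d), ‖z‖ ≤ ε →
      ‖f (xbar + z) - f (xbar - z) - (2 : ℝ) • (Matrix.toEuclideanLin A) z‖ ≤ C * ‖z‖ ^ 3)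
    (z : Fin ns → EuclideanSpace ℝ (Fin d))
    (δ : ℝ) (hδ : δ ≤ ε) (hz : ∀ i, ‖z i‖ ≤ δ)
    (Z : Matrix (Fin d) (Fin ns) ℝ) (hZ : ∀ j i, Z j i = z i j)
    (Y : Matrix (Fin m) (Fin ns) ℝ)
    (hY : ∀ j i, Y j i = (f (xbar + z i) - f (xbar - z i)) j)
    (lam : ℝ) (hlam : 0 < lam)
    (hG : (Z * Zᵀ - lam • (1 : Matrix (Fin d) (Fin d) ℝ)).PosSemidef) :
    ‖LinearMap.toContinuousLinearMap
        (Matrix.toEuclideanLin ((1 / 2 : ℝ) • (Y * Zᵀ * (Z * Zᵀ)⁻¹) - A))‖ ≤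
      C * ns * δ ^ 4 / (2 * lam) := by
  simpa [l2_opNorm_def, leastSquaresEstimate] using
    llscd_error_bound_general f xbar A C δ 3 hC.le z hz (fun i => hcd (z i) ((hz i).trans hδ)) Z hZ
      Y hY lam hlam hG
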